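/- arXiv:2412.16193 — 2 statements merged into one kernel-verified Lean document; each statement's English description precedes it below -/
import Mathlib

section
/- For all n ≥ 0 and α ≥ 0, T_4(3^{2α+3} n + (19·3^{2α+2} − 3)/8) ≡ 0 (mod 3). -/
noncomputable def Tcount (ℓ k n : ℕ) : ℕ :=
  Nat.card {f : Fin k → Σ m : ℕ, Nat.Partition m //
    (∑ i, (f i).1) = n ∧ ∀ i, ∀ p ∈ (f i).2.parts, ¬ ℓ ∣ p}

/-!
Let `B`, `φ(-q)`, `ψ(-q)` be the generating series of 4-regular partitions and the two theta series
`∑ (-1) ^ j q ^ (j ^ 2)`, `∑ (-1) ^ y q ^ (2 y ^ 2 + y)`. Gauss's product formulas for the theta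
series, obtained as limits of finite telescoping identities in the manner of Shanks, give
`B φ(-q) = ψ(-q)`. Write `S` for the extraction of the coefficients of index `3 k + 1`. Modulo 3,
`f ^ 3 = f(q ^ 3)`, hence `S(B) φ(-q) = S(B φ(-q) ^ 3) = S(ψ(-q) φ(-q) ^ 2)`. Splitting the theta
series by residues of the index modulo 3 evaluates the right-hand side, and
`φ(-q) ψ(q ^ 2) = ψ(-q) ^ 2` turns the result into `S(B) = φ(-q) ψ(-q ^ 3)` modulo 3.

Since `B ^ 3 = B(q ^ 3)` modulo 3, the number of triples of total size `3 (3 k + 1)` is congruent to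
the coefficient of `q ^ k` in `φ(-q) ψ(-q ^ 3)`. This coefficient vanishes unless
`8 k + 3 = 8 j ^ 2 + 3 (4 y + 1) ^ 2` is solvable. Here `8 k + 3 = 9 ^ α (24 n + 19)`, which is not
of this form by descent on `α`.
-/

open Filter Finset PowerSeries
open scoped Topology PowerSeries.WithPiTopology

section FiniteGauss

variable {R : Type*} [CommRing R] (x : R)

theorem prod_one_add_pow_mul_sum_pow_sq (n : ℕ) :
    (∏ i ∈ range n, (1 + x ^ (i + 1))) *
        (1 + 2 * ∑ s ∈ range n, (-1) ^ (s + 1) * x ^ (s + 1) ^ 2) =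
      ∏ i ∈ range n, (1 - x ^ (i + 1)) +
        2 * ∑ s ∈ range n, (-1) ^ (s + 1) * x ^ ((s + 1) * (n + 1)) *
          (∏ i ∈ Ico (s + 1) n, (1 - x ^ (i + 1))) * ∏ i ∈ range s, (1 + x ^ (i + 1)) := by
  let D (s : ℕ) : R := ∏ i ∈ range s, (1 + x ^ (i + 1))
  let N (s n : ℕ) : R := ∏ i ∈ Ico s n, (1 - x ^ (i + 1))
  let h (n s : ℕ) : R := (-1) ^ (s + 1) * x ^ ((s + 1) * (n + 1)) * N (s + 1) n * D s
  induction n with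
  | zero => simp
  | succ n ih =>
    let v (s : ℕ) : R := (-1) ^ (s + 1) * x ^ ((s + 1) * (n + 1)) * N s n * D s
    have telescope : ∀ s ∈ range n, h (n + 1) s - (1 + x ^ (n + 1)) * h n s = v (s + 1) - v s := by
      intro s hs
      have hsn : s < n := mem_range.mp hs
      simp only [h, v, N, D, prod_range_succ _ s, prod_Ico_succ_top (Nat.succ_le_of_lt hsn),
        prod_eq_prod_Ico_succ_bot hsn]
      ring
    have sum_h := sum_congr rfl telescope
    rw [sum_sub_distrib, ← mul_sum, sum_range_sub] at sum_h
    have h_top : h (n + 1) n = (-1) ^ (n + 1) * x ^ ((n + 1) * (n + 2)) * D n := by simp [h, N]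
    have v_top : v n = (-1) ^ (n + 1) * x ^ ((n + 1) * (n + 1)) * D n := by simp [v, N]
    have v_zero : v 0 = -(x ^ (n + 1) * ∏ i ∈ range n, (1 - x ^ (i + 1))) := by simp [v, N, D]
    rw [v_top, v_zero] at sum_h
    change D n * _ = _ + 2 * ∑ s ∈ range n, h n s at ih
    change D (n + 1) * _ = _ + 2 * ∑ s ∈ range (n + 1), h (n + 1) s
    have hD : D (n + 1) = D n * (1 + x ^ (n + 1)) := prod_range_succ _ _
    rw [sum_range_succ _ n, sum_range_succ _ n, prod_range_succ _ n, h_top, hD]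
    linear_combination (1 + x ^ (n + 1)) * ih - 2 * sum_h

theorem prod_one_add_pow_mul_sum_pow_triangular (n : ℕ) :
    (∏ i ∈ range n, (1 + x ^ (2 * i + 1))) *
        ∑ s ∈ range n, (-1) ^ s * x ^ (2 * s ^ 2 + s) * (1 - x ^ (2 * s + 1)) =
      ∑ s ∈ range n, (-1) ^ s * x ^ (s * (2 * n + 1)) *
        (∏ i ∈ Ico s n, (1 - x ^ (2 * i + 2))) * ∏ i ∈ range s, (1 + x ^ (2 * i + 1)) := by
  let D (s : ℕ) : R := ∏ i ∈ range s, (1 + x ^ (2 * i + 1))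
  let N (s n : ℕ) : R := ∏ i ∈ Ico s n, (1 - x ^ (2 * i + 2))
  let g (n s : ℕ) : R := (-1) ^ s * x ^ (s * (2 * n + 1)) * N s n * D s
  induction n with
  | zero => simp
  | succ n ih =>
    let v (s : ℕ) : R := (-1) ^ s * x ^ (s * (2 * n + 1)) * (1 - x ^ (2 * s)) * N s n * D s
    have telescope : ∀ s ∈ range n,
        g (n + 1) s - (1 + x ^ (2 * n + 1)) * g n s = v (s + 1) - v s := by
      intro s hs
      have hsn : s < n := mem_range.mp hs
      simp only [g, v, N, D, prod_range_succ _ s, prod_Ico_succ_top hsn.le,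
        prod_eq_prod_Ico_succ_bot hsn]
      ring
    have sum_g := sum_congr rfl telescope
    have g_top : g (n + 1) n =
        (-1) ^ n * x ^ (n * (2 * (n + 1) + 1)) * (1 - x ^ (2 * n + 2)) * D n := by
      simp [g, N]
    have v_top : v n = (-1) ^ n * x ^ (n * (2 * n + 1)) * (1 - x ^ (2 * n)) * D n := by
      simp [v, N]
    have v_zero : v 0 = 0 := by simp [v]
    rw [sum_sub_distrib, ← mul_sum, sum_range_sub, v_top, v_zero] at sum_g
    change D n * _ = ∑ s ∈ range n, g n s at ih
    change D (n + 1) * _ = ∑ s ∈ range (n + 1), g (n + 1) s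
    have hD : D (n + 1) = D n * (1 + x ^ (2 * n + 1)) := prod_range_succ _ _
    rw [sum_range_succ _ n, sum_range_succ _ n, g_top, hD]
    linear_combination (1 + x ^ (2 * n + 1)) * ih - sum_g

end FiniteGauss

section Monomials

variable {R ι κ : Type*}

theorem tendsto_toNat_cofinite {e : ℤ → ℤ} (he : ∀ j, |j| ≤ e j + 1) :
    Tendsto (fun j ↦ (e j).toNat) cofinite atTop := by
  refine tendsto_atTop.mpr fun b ↦ eventually_cofinite.mpr ?_
  refine (Set.finite_Icc (-(b + 1 : ℤ)) (b + 1)).subset fun j hj ↦ ?_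
  have := he j
  have := abs_le.mp this
  simp only [Set.mem_ofPred_eq, Set.mem_Icc] at hj ⊢
  omega

theorem tendsto_add_cofinite_prod {e : ι → ℕ} {e' : κ → ℕ} (he : Tendsto e cofinite atTop)
    (he' : Tendsto e' cofinite atTop) :
    Tendsto (fun p : ι × κ ↦ e p.1 + e' p.2) cofinite atTop := by
  refine tendsto_atTop.mpr fun b ↦ eventually_cofinite.mpr ?_
  refine ((eventually_cofinite.mp (he.eventually_ge_atTop b)).prod
    (eventually_cofinite.mp (he'.eventually_ge_atTop b))).subset fun p hp ↦ ?_
  simp only [Set.mem_ofPred_eq, Set.mem_prod] at hp ⊢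
  omega

theorem summable_monomial [Semiring R] [TopologicalSpace R] {e : ι → ℕ}
    (he : Tendsto e cofinite atTop) (w : ι → R) : Summable fun i ↦ monomial (e i) (w i) := by
  refine (WithPiTopology.summable_iff_summable_coeff R).mpr fun d ↦ summable_of_hasFiniteSupport ?_
  refine (eventually_cofinite.mp (he.eventually_gt_atTop d)).subset fun i hi hlt ↦ hi ?_
  exact (coeff_monomial ..).trans (if_neg hlt.ne)

theorem hasSum_monomial_mul [Semiring R] [TopologicalSpace R] [IsTopologicalSemiring R] [T3Space R]
    {e : ι → ℕ} {e' : κ → ℕ} {w : ι → R} {w' : κ → R} {f g : R⟦X⟧}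
    (he : Tendsto e cofinite atTop) (he' : Tendsto e' cofinite atTop)
    (hf : HasSum (fun i ↦ monomial (e i) (w i)) f)
    (hg : HasSum (fun i ↦ monomial (e' i) (w' i)) g) :
    HasSum (fun p : ι × κ ↦ monomial (e p.1 + e' p.2) (w p.1 * w' p.2)) (f * g) := by
  have hsum := summable_monomial (tendsto_add_cofinite_prod he he') fun p ↦ w p.1 * w' p.2
  have : T3Space R⟦X⟧ := inferInstanceAs (T3Space ((Unit →₀ ℕ) → R))
  simp only [← monomial_mul_monomial] at hsum ⊢
  exact HasSum.mul (f := fun i ↦ monomial (e i) (w i)) (g := fun i ↦ monomial (e' i) (w' i))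
    hf hg hsum

theorem tendsto_zero_of_X_pow_dvd [Semiring R] [TopologicalSpace R] {f : ℕ → R⟦X⟧}
    (hf : ∀ n, X ^ n ∣ f n) : Tendsto f atTop (𝓝 0) := by
  refine (WithPiTopology.tendsto_iff_coeff_tendsto R f atTop 0).mpr fun d ↦ ?_
  refine tendsto_atTop_of_eventually_const (i₀ := d + 1) fun n hn ↦ ?_
  exact (X_pow_dvd_iff.mp (hf n) d hn).trans (map_zero _).symm

end Monomials

section Theta

/-- The theta series `φ(-q) = ∑ (-1) ^ j q ^ (j ^ 2)`, over all integers `j`. -/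
noncomputable def phiNeg : ℤ⟦X⟧ := ∑' j : ℤ, monomial (j ^ 2).toNat (j.negOnePow : ℤ)

/-- The theta series `ψ(-q) = ∑ (-1) ^ y q ^ (2 y ^ 2 + y)`, over all integers `y`. -/
noncomputable def psiNeg : ℤ⟦X⟧ := ∑' y : ℤ, monomial (2 * y ^ 2 + y).toNat (y.negOnePow : ℤ)

/-- The theta series `2 ψ(q ^ 2) = ∑ q ^ (m ^ 2 + m)`, over all integers `m`. -/
noncomputable def twoPsiSq : ℤ⟦X⟧ := ∑' m : ℤ, monomial (m ^ 2 + m).toNat 1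

theorem tendsto_phiNeg_exponent : Tendsto (fun j : ℤ ↦ (j ^ 2).toNat) cofinite atTop :=
  tendsto_toNat_cofinite fun j ↦ abs_le.mpr ⟨by nlinarith, by nlinarith⟩

theorem tendsto_psiNeg_exponent : Tendsto (fun y : ℤ ↦ (2 * y ^ 2 + y).toNat) cofinite atTop :=
  tendsto_toNat_cofinite fun j ↦ abs_le.mpr ⟨by nlinarith, by nlinarith [sq_nonneg j]⟩

theorem tendsto_twoPsiSq_exponent : Tendsto (fun m : ℤ ↦ (m ^ 2 + m).toNat) cofinite atTop :=
  tendsto_toNat_cofinite fun j ↦ abs_le.mpr ⟨by nlinarith, by nlinarith⟩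

theorem hasSum_phiNeg : HasSum (fun j : ℤ ↦ monomial (j ^ 2).toNat (j.negOnePow : ℤ)) phiNeg :=
  (summable_monomial tendsto_phiNeg_exponent _).hasSum

theorem hasSum_psiNeg :
    HasSum (fun y : ℤ ↦ monomial (2 * y ^ 2 + y).toNat (y.negOnePow : ℤ)) psiNeg :=
  (summable_monomial tendsto_psiNeg_exponent _).hasSum

theorem hasSum_twoPsiSq : HasSum (fun m : ℤ ↦ monomial (m ^ 2 + m).toNat 1) twoPsiSq :=
  (summable_monomial tendsto_twoPsiSq_exponent _).hasSum

theorem monomial_negOnePow (n k : ℕ) :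
    monomial n ((k : ℤ).negOnePow : ℤ) = (-1 : ℤ⟦X⟧) ^ k * X ^ n := by
  rw [Int.coe_negOnePow_natCast, monomial_eq_C_mul_X_pow]
  simp

theorem tendsto_sum_phiNeg :
    Tendsto (fun n ↦ 1 + 2 * ∑ s ∈ range n, (-1) ^ (s + 1) * X ^ (s + 1) ^ 2) atTop (𝓝 phiNeg) := by
  have h := (tendsto_add_atTop_iff_nat 1).mpr hasSum_phiNeg.nat_add_neg.tendsto_sum_nat
  convert h.sub_const 1 using 2 with n
  · have term (i : ℕ) : monomial ((i : ℤ) ^ 2).toNat ((i : ℤ).negOnePow : ℤ) +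
        monomial ((-i : ℤ) ^ 2).toNat ((-i : ℤ).negOnePow : ℤ) = 2 * ((-1) ^ i * X ^ i ^ 2) := by
      rw [neg_sq, Int.negOnePow_neg, show ((i : ℤ) ^ 2).toNat = i ^ 2 by norm_cast,
        monomial_negOnePow, two_mul]
    simp only [term, sum_range_succ', ← mul_sum]
    ring
  · simp

theorem tendsto_sum_psiNeg :
    Tendsto (fun n ↦ ∑ s ∈ range n, (-1) ^ s * X ^ (2 * s ^ 2 + s) * (1 - X ^ (2 * s + 1))) atTop
      (𝓝 psiNeg) := by
  convert hasSum_psiNeg.nat_add_neg_add_one.tendsto_sum_nat using 4 with n s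
  have exponent : (2 * (s : ℤ) ^ 2 + s).toNat = 2 * s ^ 2 + s := by norm_cast
  have neg_exponent : (2 * (-(s + 1 : ℤ)) ^ 2 + -(s + 1 : ℤ)).toNat =
      2 * s ^ 2 + s + (2 * s + 1) := by
    rw [show 2 * (-(s + 1 : ℤ)) ^ 2 + -(s + 1 : ℤ) = (2 * s ^ 2 + s + (2 * s + 1) : ℕ) by
      push_cast; ring, Int.toNat_natCast]
  rw [exponent, neg_exponent, Int.negOnePow_neg, ← Nat.cast_succ, monomial_negOnePow,
    monomial_negOnePow, pow_add X, pow_succ (-1)]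
  ring

end Theta

section GaussProducts

variable {R : Type*}

theorem tendsto_mul_add_atTop {a : ℕ} (ha : 0 < a) (b : ℕ) :
    Tendsto (fun i ↦ a * i + b) atTop atTop :=
  tendsto_atTop_mono (fun _ ↦ (Nat.le_mul_of_pos_left _ ha).trans (Nat.le_add_right _ b)) tendsto_id

theorem multipliable_one_add_X_pow [CommSemiring R] [TopologicalSpace R] {e : ℕ → ℕ}
    (he : Tendsto e atTop atTop) : Multipliable fun i ↦ (1 + X ^ e i : R⟦X⟧) := by
  nontriviality R
  refine WithPiTopology.multipliable_one_add_of_tendsto_order_atTop_nhds_top R ?_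
  simp only [order_X_pow]
  exact ENat.tendsto_natCast_nhds_top.comp he

theorem multipliable_one_sub_X_pow [CommRing R] [TopologicalSpace R] {e : ℕ → ℕ}
    (he : Tendsto e atTop atTop) : Multipliable fun i ↦ (1 - X ^ e i : R⟦X⟧) := by
  nontriviality R
  simp only [sub_eq_add_neg]
  refine WithPiTopology.multipliable_one_add_of_tendsto_order_atTop_nhds_top R ?_
  simp only [order_neg, order_X_pow]
  exact ENat.tendsto_natCast_nhds_top.comp he

theorem tprod_one_add_mul_phiNeg :
    (∏' i : ℕ, (1 + X ^ (i + 1))) * phiNeg = ∏' i : ℕ, (1 - X ^ (i + 1) : ℤ⟦X⟧) := by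
  have hadd : Multipliable fun i : ℕ ↦ (1 + X ^ (i + 1) : ℤ⟦X⟧) :=
    multipliable_one_add_X_pow (tendsto_add_atTop_nat 1)
  have hsub : Multipliable fun i : ℕ ↦ (1 - X ^ (i + 1) : ℤ⟦X⟧) :=
    multipliable_one_sub_X_pow (tendsto_add_atTop_nat 1)
  have remainder : Tendsto (fun n ↦ (∏ i ∈ range n, (1 + X ^ (i + 1))) *
      (1 + 2 * ∑ s ∈ range n, (-1) ^ (s + 1) * X ^ (s + 1) ^ 2) -
        ∏ i ∈ range n, (1 - X ^ (i + 1) : ℤ⟦X⟧)) atTop (𝓝 0) := by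
    refine tendsto_zero_of_X_pow_dvd fun n ↦ ?_
    rw [prod_one_add_pow_mul_sum_pow_sq, add_sub_cancel_left]
    refine Dvd.dvd.mul_left (dvd_sum fun s _ ↦ ?_) 2
    refine Dvd.dvd.mul_right (Dvd.dvd.mul_right (Dvd.dvd.mul_left (pow_dvd_pow X ?_) _) _) _
    nlinarith
  refine sub_eq_zero.mp (tendsto_nhds_unique ?_ remainder)
  exact (hadd.hasProd.tendsto_prod_nat.mul tendsto_sum_phiNeg).sub hsub.hasProd.tendsto_prod_nat

theorem tprod_one_add_mul_psiNeg :
    (∏' i : ℕ, (1 + X ^ (2 * i + 1))) * psiNeg = ∏' i : ℕ, (1 - X ^ (2 * i + 2) : ℤ⟦X⟧) := by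
  have hadd : Multipliable fun i : ℕ ↦ (1 + X ^ (2 * i + 1) : ℤ⟦X⟧) :=
    multipliable_one_add_X_pow (tendsto_mul_add_atTop two_pos _)
  have hsub : Multipliable fun i : ℕ ↦ (1 - X ^ (2 * i + 2) : ℤ⟦X⟧) :=
    multipliable_one_sub_X_pow (tendsto_mul_add_atTop two_pos _)
  have remainder : Tendsto (fun n ↦ (∏ i ∈ range n, (1 + X ^ (2 * i + 1))) *
      (∑ s ∈ range n, (-1) ^ s * X ^ (2 * s ^ 2 + s) * (1 - X ^ (2 * s + 1))) -
        ∏ i ∈ range n, (1 - X ^ (2 * i + 2) : ℤ⟦X⟧)) atTop (𝓝 0) := by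
    refine tendsto_zero_of_X_pow_dvd fun n ↦ ?_
    rw [prod_one_add_pow_mul_sum_pow_triangular]
    rcases n with _ | n
    · simp
    rw [sum_range_succ']
    simp only [pow_zero, zero_mul, mul_one, Nat.Ico_zero_eq_range, one_mul, range_zero,
      prod_empty, add_sub_cancel_right]
    refine dvd_sum fun s _ ↦ ?_
    refine Dvd.dvd.mul_right (Dvd.dvd.mul_right (Dvd.dvd.mul_left (pow_dvd_pow X ?_) _) _) _
    nlinarith
  refine sub_eq_zero.mp (tendsto_nhds_unique ?_ remainder)
  exact (hadd.hasProd.tendsto_prod_nat.mul tendsto_sum_psiNeg).sub hsub.hasProd.tendsto_prod_nat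

end GaussProducts

section RegularPartitions

/-- The generating series of the `ℓ`-regular partitions, i.e. those without part divisible by
`ℓ`. -/
noncomputable def regularSeries (ℓ : ℕ) : ℤ⟦X⟧ :=
  .mk fun n ↦ (#(Nat.Partition.restricted n (¬ ℓ ∣ ·)) : ℤ)

theorem Tcount_eq_coeff_regularSeries_pow (ℓ k m : ℕ) :
    (Tcount ℓ k m : ℤ) = coeff m (regularSeries ℓ ^ k) := by
  let tuples : Finset (Σ l : Fin k → ℕ, ∀ i, Nat.Partition (l i)) :=
    (piAntidiag univ m).sigma
      fun l ↦ Fintype.piFinset fun i ↦ Nat.Partition.restricted (l i) (¬ ℓ ∣ ·)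
  let e : (Fin k → Σ m : ℕ, Nat.Partition m) ≃ Σ l : Fin k → ℕ, ∀ i, Nat.Partition (l i) :=
    { toFun := fun f ↦ ⟨fun i ↦ (f i).1, fun i ↦ (f i).2⟩
      invFun := fun x i ↦ ⟨x.1 i, x.2 i⟩ }
  have card_tuples : Tcount ℓ k m = #tuples := by
    rw [Tcount, ← Nat.card_eq_finsetCard tuples]
    refine Nat.card_congr (e.subtypeEquiv fun f ↦ ?_)
    simp [tuples, e, mem_piAntidiag, Nat.Partition.restricted]
  rw [card_tuples, ← Fin.prod_const, PowerSeries.coeff_prod, card_sigma, Nat.cast_sum]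
  refine sum_bij' (fun l _ ↦ Finsupp.equivFunOnFinite.symm l) (fun l _ ↦ ⇑l) ?_ ?_ ?_ ?_ ?_
  · intro l hl
    simpa [mem_piAntidiag, mem_finsuppAntidiag] using hl
  · intro l hl
    simpa [mem_piAntidiag, mem_finsuppAntidiag] using hl
  · exact fun _ _ ↦ rfl
  · exact fun _ _ ↦ Finsupp.ext fun _ ↦ rfl
  · simp [regularSeries, Fintype.card_piFinset]

theorem regularSeries_four_eq_tprod :
    regularSeries 4 = (∏' i : ℕ, (1 + X ^ (i + 1))) * ∏' i : ℕ, (1 + X ^ (2 * i + 2)) := by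
  have multipliable_all : Multipliable fun i : ℕ ↦ (1 + X ^ (i + 1) : ℤ⟦X⟧) :=
    multipliable_one_add_X_pow (tendsto_add_atTop_nat 1)
  have multipliable_even : Multipliable fun i : ℕ ↦ (1 + X ^ (2 * i + 2) : ℤ⟦X⟧) :=
    multipliable_one_add_X_pow (tendsto_mul_add_atTop two_pos 2)
  rw [regularSeries,
    Nat.Partition.powerSeriesMk_card_restricted_eq_powerSeriesMk_card_countRestricted
      ℤ (m := 4) (by norm_num),
    Nat.Partition.powerSeriesMk_card_countRestricted_eq_tprod ℤ (m := 4) (by norm_num),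
    ← multipliable_all.tprod_mul multipliable_even]
  refine tprod_congr fun i ↦ ?_
  simp only [sum_range_succ, sum_range_zero]
  ring

theorem constantCoeff_tprod_one_add_X_pow {e : ℕ → ℕ} (he : Tendsto e atTop atTop)
    (he' : ∀ i, e i ≠ 0) : constantCoeff (∏' i, (1 + X ^ e i : ℤ⟦X⟧)) = 1 := by
  rw [(multipliable_one_add_X_pow he).map_tprod _ (WithPiTopology.continuous_constantCoeff ℤ)]
  simp [he']

theorem tprod_one_add_X_pow_odd_mul_even :
    (∏' i : ℕ, (1 + X ^ (2 * i + 1))) * ∏' i : ℕ, (1 + X ^ (2 * i + 2)) =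
      ∏' i : ℕ, (1 + X ^ (i + 1) : ℤ⟦X⟧) :=
  tprod_even_mul_odd (f := fun i ↦ (1 + X ^ (i + 1) : ℤ⟦X⟧))
    (multipliable_one_add_X_pow (tendsto_mul_add_atTop two_pos 1))
    (multipliable_one_add_X_pow (tendsto_mul_add_atTop two_pos 2))

theorem tprod_one_add_mul_tprod_one_sub_X_pow :
    (∏' i : ℕ, (1 + X ^ (i + 1))) * ∏' i : ℕ, (1 - X ^ (i + 1)) =
      ∏' i : ℕ, (1 - X ^ (2 * i + 2) : ℤ⟦X⟧) := by
  have hadd : Multipliable fun i : ℕ ↦ (1 + X ^ (i + 1) : ℤ⟦X⟧) :=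
    multipliable_one_add_X_pow (tendsto_add_atTop_nat 1)
  have hsub : Multipliable fun i : ℕ ↦ (1 - X ^ (i + 1) : ℤ⟦X⟧) :=
    multipliable_one_sub_X_pow (tendsto_add_atTop_nat 1)
  rw [← hadd.tprod_mul hsub]
  exact tprod_congr fun i ↦ by ring

theorem regularSeries_four_mul_phiNeg : regularSeries 4 * phiNeg = psiNeg := by
  have odd_ne_zero : ∏' i : ℕ, (1 + X ^ (2 * i + 1) : ℤ⟦X⟧) ≠ 0 := fun h ↦ by
    simpa [h] using constantCoeff_tprod_one_add_X_pow (tendsto_mul_add_atTop two_pos 1)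
      fun i ↦ Nat.succ_ne_zero _
  refine mul_left_cancel₀ odd_ne_zero ?_
  rw [tprod_one_add_mul_psiNeg, ← tprod_one_add_mul_tprod_one_sub_X_pow,
    ← tprod_one_add_mul_phiNeg, regularSeries_four_eq_tprod, ← tprod_one_add_X_pow_odd_mul_even]
  ring

end RegularPartitions

section Reindexing

variable {ι κ κ' : Type*}

theorem hasSum_indicator_range {M : Type*} [AddCommMonoid M] [TopologicalSpace M] {σ : κ → ι}
    (hσ : σ.Injective) {f : ι → M} {a : M} :
    HasSum ((Set.range σ).indicator f) a ↔ HasSum (f ∘ σ) a :=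
  hasSum_subtype_iff_indicator.symm.trans hσ.hasSum_range_iff

theorem hasSum_of_range_eq_compl {M : Type*} [AddCommMonoid M] [TopologicalSpace M]
    [ContinuousAdd M] {σ : κ → ι} {τ : κ' → ι} (hσ : σ.Injective) (hτ : τ.Injective)
    (hrange : Set.range τ = (Set.range σ)ᶜ) {f : ι → M} {a b : M}
    (ha : HasSum (f ∘ σ) a) (hb : HasSum (f ∘ τ) b) : HasSum f (a + b) := by
  rw [← Set.indicator_self_add_compl (Set.range σ) f, ← hrange]
  exact ((hasSum_indicator_range hσ).mpr ha).add ((hasSum_indicator_range hτ).mpr hb)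

end Reindexing

section Multisection

variable {R ι κ : Type*} {m r : ℕ}

section Semiring

variable [Semiring R]

/-- The `r`-th `m`-section `∑ a (m k + r) q ^ k` of a power series `∑ a k q ^ k`. It picks out the
coefficients along an arithmetic progression. -/
noncomputable def multisection (m r : ℕ) : R⟦X⟧ →ₗ[R] R⟦X⟧ where
  toFun f := .mk fun k ↦ coeff (m * k + r) f
  map_add' f g := by ext; simp
  map_smul' c f := by ext; simp

@[simp]
theorem coeff_multisection (k : ℕ) (f : R⟦X⟧) :
    coeff k (multisection m r f) = coeff (m * k + r) f :=
  coeff_mk k fun k ↦ coeff (m * k + r) f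

theorem map_multisection {S : Type*} [Semiring S] (φ : R →+* S) (f : R⟦X⟧) :
    PowerSeries.map φ (multisection m r f) = multisection m r (PowerSeries.map φ f) := by
  ext
  simp

theorem multisection_monomial (hr : r < m) (n : ℕ) (a : R) :
    multisection m r (monomial n a) = if n % m = r then monomial (n / m) a else 0 := by
  ext k
  have index_eq : m * k + r = n ↔ n / m = k ∧ n % m = r := by
    rw [Nat.div_mod_unique (Nat.zero_lt_of_lt hr), add_comm]
    exact (and_iff_left hr).symm
  split_ifs with h <;> simp [coeff_monomial, index_eq, h, eq_comm]

variable [TopologicalSpace R]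

theorem hasSum_multisection (hr : r < m) {e : ι → ℕ} {w : ι → R} {f : R⟦X⟧}
    (hf : HasSum (fun i ↦ monomial (e i) (w i)) f) :
    HasSum ({i | e i % m = r}.indicator fun i ↦ monomial (e i / m) (w i))
      (multisection m r f) := by
  refine (WithPiTopology.hasSum_iff_hasSum_coeff R).mpr fun d ↦ ?_
  have h := (WithPiTopology.hasSum_iff_hasSum_coeff R).mp hf (m * d + r)
  simp only [← coeff_multisection, multisection_monomial hr] at h
  simpa only [Set.indicator_apply, Set.mem_ofPred_eq] using h

theorem hasSum_multisection_comp (hr : r < m) {e : ι → ℕ} {w : ι → R} {f : R⟦X⟧}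
    (hf : HasSum (fun i ↦ monomial (e i) (w i)) f) {σ : κ → ι} (hσ : σ.Injective)
    (hrange : Set.range σ = {i | e i % m = r}) :
    HasSum (fun k ↦ monomial (e (σ k) / m) (w (σ k))) (multisection m r f) := by
  have h := hasSum_multisection hr hf
  rw [← hrange, hasSum_indicator_range hσ] at h
  exact h

theorem multisection_eq_zero [T2Space R] (hr : r < m) {e : ι → ℕ} {w : ι → R} {f : R⟦X⟧}
    (hf : HasSum (fun i ↦ monomial (e i) (w i)) f) (he : ∀ i, e i % m ≠ r) :
    multisection m r f = 0 := by
  refine (hasSum_multisection hr hf).unique ?_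
  simp [he, hasSum_zero]

end Semiring

section CommRing

variable [CommRing R]

theorem multisection_mul_expand (hr : r < m) (f g : R⟦X⟧) :
    multisection m r (f * expand m (Nat.ne_zero_of_lt hr) g) = multisection m r f * g := by
  have hm : 0 < m := Nat.zero_lt_of_lt hr
  ext k
  rw [coeff_multisection, coeff_mul, coeff_mul]
  refine (sum_of_injOn (fun p ↦ (m * p.1 + r, m * p.2)) ?_ ?_ ?_ ?_).symm
  · rintro ⟨a, b⟩ - ⟨c, d⟩ - h
    simpa [hm.ne'] using h
  · rintro ⟨a, b⟩ hab
    simp only [mem_coe, HasAntidiagonal.mem_antidiagonal] at hab ⊢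
    rw [← hab]
    ring
  · rintro ⟨a, b⟩ hab not_image
    rw [coeff_expand]
    split_ifs with hdvd
    · obtain ⟨c, rfl⟩ := hdvd
      rw [HasAntidiagonal.mem_antidiagonal] at hab
      have hck : c ≤ k := by
        by_contra! hlt
        have : m * (k + 1) ≤ m * c := Nat.mul_le_mul_left m hlt
        dsimp only at hab
        linarith
      refine absurd ⟨(k - c, c), by simp [hck], ?_⟩ not_image
      obtain ⟨d, rfl⟩ := Nat.exists_eq_add_of_le' hck
      dsimp only at hab ⊢
      rw [Nat.add_sub_cancel]
      congr 1
      linarith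
    · exact mul_zero _
  · rintro ⟨a, b⟩ -
    rw [coeff_multisection, coeff_expand_mul]

theorem multisection_X_pow_mul_expand (hr : r < m) (i : ℕ) (g : R⟦X⟧) :
    multisection m r (X ^ i * expand m (Nat.ne_zero_of_lt hr) g) =
      if i % m = r then X ^ (i / m) * g else 0 := by
  rw [multisection_mul_expand hr, X_pow_eq, multisection_monomial hr, X_pow_eq]
  split_ifs
  · rfl
  · exact zero_mul g

theorem sum_X_pow_mul_expand_multisection (hm : m ≠ 0) (f : R⟦X⟧) :
    ∑ r ∈ range m, X ^ r * expand m hm (multisection m r f) = f := by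
  ext n
  have hmod : n % m < m := Nat.mod_lt n (Nat.pos_of_ne_zero hm)
  rw [map_sum, sum_eq_single_of_mem _ (mem_range.mpr hmod)]
  · rw [coeff_X_pow_mul', if_pos (Nat.mod_le n m), coeff_expand, if_pos (Nat.dvd_sub_mod n),
      coeff_multisection, Nat.mul_div_cancel' (Nat.dvd_sub_mod n),
      Nat.sub_add_cancel (Nat.mod_le n m)]
  · intro r hr hne
    rw [coeff_X_pow_mul', coeff_expand]
    split_ifs with hle hdvd
    · refine absurd ?_ hne
      rw [← (Nat.modEq_iff_dvd' hle).mpr hdvd, Nat.mod_eq_of_lt (mem_range.mp hr)]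
    all_goals rfl

theorem multisection_mul (hr : r < m) (f g : R⟦X⟧) :
    multisection m r (f * g) = ∑ i ∈ range m, ∑ j ∈ range m, if (i + j) % m = r then
      X ^ ((i + j) / m) * (multisection m i f * multisection m j g) else 0 := by
  have hm : m ≠ 0 := Nat.ne_zero_of_lt hr
  conv_lhs => rw [← sum_X_pow_mul_expand_multisection hm f,
    ← sum_X_pow_mul_expand_multisection hm g, sum_mul_sum]
  simp only [map_sum]
  refine sum_congr rfl fun i _ ↦ sum_congr rfl fun j _ ↦ ?_
  rw [← multisection_X_pow_mul_expand hr, map_mul (expand m hm), pow_add]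
  ring_nf

theorem hasSum_expand [TopologicalSpace R] (hm : m ≠ 0) {e : ι → ℕ} {w : ι → R} {f : R⟦X⟧}
    (hf : HasSum (fun i ↦ monomial (e i) (w i)) f) :
    HasSum (fun i ↦ monomial (m * e i) (w i)) (expand m hm f) := by
  refine (WithPiTopology.hasSum_iff_hasSum_coeff R).mpr fun d ↦ ?_
  simp_rw [← expand_monomial m hm, coeff_expand]
  split_ifs
  · exact (WithPiTopology.hasSum_iff_hasSum_coeff R).mp hf (d / m)
  · exact hasSum_zero

end CommRing

end Multisection

section ThetaIdentities

theorem two_mul_sq_add_self_nonneg (y : ℤ) : 0 ≤ 2 * y ^ 2 + y := by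
  nlinarith [sq_nonneg y]

theorem sq_add_self_nonneg (m : ℤ) : 0 ≤ m ^ 2 + m := by
  nlinarith

theorem range_sub_neg_one_sub : Set.range (fun p : ℤ × ℤ ↦ (p.1 - p.2, -1 - p.1 - p.2)) =
    (Set.range fun p : ℤ × ℤ ↦ (p.1 - p.2, p.1 + p.2))ᶜ := by
  ext ⟨z, m⟩
  simp only [Set.mem_range, Set.mem_compl_iff, Prod.exists, Prod.mk.injEq, not_exists, not_and]
  constructor
  · intro ⟨a, b, hz, hm⟩ c d hz' hm'
    omega
  · intro h
    have := h ((z + m) / 2) ((m - z) / 2)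
    exact ⟨(z - m - 1) / 2, (-1 - m - z) / 2, by omega, by omega⟩

/- The pairs `(z, m)` with `z ≡ m` modulo 2 and those with `z ≢ m` each contribute `ψ(-q) ^ 2`. -/
theorem phiNeg_mul_twoPsiSq : phiNeg * twoPsiSq = 2 * psiNeg ^ 2 := by
  let e (p : ℤ × ℤ) : ℕ := (2 * p.1 ^ 2 + p.1).toNat + (2 * p.2 ^ 2 + p.2).toNat
  let F (p : ℤ × ℤ) : ℤ⟦X⟧ := monomial ((p.1 ^ 2).toNat + (p.2 ^ 2 + p.2).toNat) p.1.negOnePow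
  have hasSum_sq : HasSum (fun p : ℤ × ℤ ↦ monomial (e p) (p.1.negOnePow * p.2.negOnePow : ℤ))
      (psiNeg ^ 2) := by
    simpa only [sq psiNeg] using hasSum_monomial_mul tendsto_psiNeg_exponent tendsto_psiNeg_exponent
      hasSum_psiNeg hasSum_psiNeg
  have hasSum_mul : HasSum F (phiNeg * twoPsiSq) := by
    simpa only [mul_one] using hasSum_monomial_mul tendsto_phiNeg_exponent tendsto_twoPsiSq_exponent
      hasSum_phiNeg hasSum_twoPsiSq
  have exponent (a b : ℤ) : ((a - b) ^ 2).toNat + ((a + b) ^ 2 + (a + b)).toNat = e (a, b) := by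
    simp only [e, ← Int.toNat_add, two_mul_sq_add_self_nonneg, sq_add_self_nonneg, sq_nonneg]
    ring_nf
  have exponent_reflect (a b : ℤ) :
      ((a - b) ^ 2).toNat + ((-1 - a - b) ^ 2 + (-1 - a - b)).toNat = e (a, b) := by
    rw [← exponent]
    ring_nf
  rw [two_mul]
  refine hasSum_mul.unique (hasSum_of_range_eq_compl ?_ ?_ range_sub_neg_one_sub ?_ ?_)
  · rintro ⟨a, b⟩ ⟨c, d⟩ h
    simp only [Prod.mk.injEq] at h ⊢
    omega
  · rintro ⟨a, b⟩ ⟨c, d⟩ h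
    simp only [Prod.mk.injEq] at h ⊢
    omega
  · simpa only [F, exponent, Int.negOnePow_sub, Function.comp_def, Units.val_mul] using hasSum_sq
  · simpa only [F, exponent_reflect, Int.negOnePow_sub, Function.comp_def, Units.val_mul]
      using hasSum_sq

theorem sq_emod_three (j : ℤ) : j ^ 2 % 3 = if j % 3 = 0 then 0 else 1 := by
  obtain h | h | h : j % 3 = 0 ∨ j % 3 = 1 ∨ j % 3 = 2 := by omega
  all_goals simp [sq, Int.mul_emod, h]

theorem two_mul_sq_add_self_emod_three (y : ℤ) :
    (2 * y ^ 2 + y) % 3 = if y % 3 = 2 then 1 else 0 := by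
  have := sq_emod_three y
  split_ifs at this ⊢ <;> omega

theorem toNat_sq_three_mul (i : ℤ) : ((3 * i) ^ 2).toNat = 9 * (i ^ 2).toNat := by
  rw [mul_pow]
  omega

theorem toNat_two_mul_sq_add_self_neg_three_mul_add_one (i : ℤ) :
    (2 * (-(3 * i + 1)) ^ 2 + -(3 * i + 1)).toNat = 9 * (2 * i ^ 2 + i).toNat + 1 := by
  have := two_mul_sq_add_self_nonneg i
  grind

theorem negOnePow_three_mul (i : ℤ) : (3 * i).negOnePow = i.negOnePow :=
  (Int.negOnePow_eq_iff _ _).mpr ⟨i, by ring⟩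

theorem negOnePow_neg_three_mul_add_one (i : ℤ) : (-(3 * i + 1)).negOnePow = -i.negOnePow := by
  rw [Int.negOnePow_neg, Int.negOnePow_succ, negOnePow_three_mul]

theorem multisection_three_zero_phiNeg :
    multisection 3 0 phiNeg = expand 3 three_ne_zero phiNeg := by
  have hrange : Set.range (fun i : ℤ ↦ 3 * i) = {j | (j ^ 2).toNat % 3 = 0} := by
    ext j
    have := sq_nonneg j
    have := sq_emod_three j
    exact ⟨by grind, fun h ↦ ⟨j / 3, by grind⟩⟩
  have exponent (n : ℕ) : 9 * n / 3 = 3 * n := by omega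
  have h := hasSum_multisection_comp three_pos hasSum_phiNeg (mul_right_injective₀ three_ne_zero)
    hrange
  simp only [toNat_sq_three_mul, exponent, negOnePow_three_mul] at h
  exact h.unique (hasSum_expand three_ne_zero hasSum_phiNeg)

theorem multisection_three_two_phiNeg : multisection 3 2 phiNeg = 0 := by
  refine multisection_eq_zero (by norm_num) hasSum_phiNeg fun j ↦ ?_
  have := sq_emod_three j
  split_ifs at this <;> omega

theorem multisection_three_one_psiNeg :
    multisection 3 1 psiNeg = -expand 3 three_ne_zero psiNeg := by
  have hrange : Set.range (fun i : ℤ ↦ -(3 * i + 1)) = {y | (2 * y ^ 2 + y).toNat % 3 = 1} := by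
    ext y
    have := two_mul_sq_add_self_nonneg y
    have := two_mul_sq_add_self_emod_three y
    exact ⟨by grind, fun h ↦ ⟨-(y + 1) / 3, by grind⟩⟩
  have exponent (n : ℕ) : (9 * n + 1) / 3 = 3 * n := by omega
  have h := hasSum_multisection_comp (by norm_num) hasSum_psiNeg (fun i j h ↦ by grind) hrange
  simp only [toNat_two_mul_sq_add_self_neg_three_mul_add_one, exponent,
    negOnePow_neg_three_mul_add_one, Units.val_neg, map_neg] at h
  exact h.unique (hasSum_expand three_ne_zero hasSum_psiNeg).neg

theorem multisection_three_two_psiNeg : multisection 3 2 psiNeg = 0 := by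
  refine multisection_eq_zero (by norm_num) hasSum_psiNeg fun y ↦ ?_
  have := two_mul_sq_add_self_emod_three y
  split_ifs at this <;> omega

theorem setOf_psiNeg_mul_phiNeg_exponent_emod_three :
    {p : ℤ × ℤ | ((2 * p.1 ^ 2 + p.1).toNat + (p.2 ^ 2).toNat) % 3 = 1} =
      (Set.range fun p : ℤ × ℤ ↦ (p.2 - p.1, p.2 + 2 * p.1 + 1)) ∪
        Set.range fun p : ℤ × ℤ ↦ (p.2 - p.1, -(p.2 + 2 * p.1 + 1)) := by
  ext ⟨y, j⟩
  simp only [Set.mem_ofPred_eq, Set.mem_union, Set.mem_range, Prod.exists, Prod.mk.injEq]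
  have := two_mul_sq_add_self_nonneg y
  have := two_mul_sq_add_self_emod_three y
  have := sq_nonneg j
  have := sq_emod_three j
  constructor
  · intro h
    have : (j - y - 1) % 3 = 0 ∨ (-j - y - 1) % 3 = 0 := by grind
    refine this.imp (fun h ↦ ?_) fun h ↦ ?_
    · exact ⟨(j - y - 1) / 3, y + (j - y - 1) / 3, by omega, by omega⟩
    · exact ⟨(-j - y - 1) / 3, y + (-j - y - 1) / 3, by omega, by omega⟩
  · rintro (⟨t, m, hy, hj⟩ | ⟨t, m, hy, hj⟩) <;> grind

theorem range_inter_range_eq_range_mul_three :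
    (Set.range fun p : ℤ × ℤ ↦ (p.2 - p.1, p.2 + 2 * p.1 + 1)) ∩
        (Set.range fun p : ℤ × ℤ ↦ (p.2 - p.1, -(p.2 + 2 * p.1 + 1))) =
      Set.range fun p : ℤ × ℤ ↦ (-(3 * p.1 + 1), 3 * p.2) := by
  ext ⟨y, j⟩
  simp only [Set.mem_inter_iff, Set.mem_range, Prod.exists, Prod.mk.injEq]
  constructor
  · rintro ⟨⟨t, m, hy, hj⟩, s, l, hy', hj'⟩
    exact ⟨-(y + 1) / 3, j / 3, by omega, by omega⟩
  · rintro ⟨i, l, hy, hj⟩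
    exact ⟨⟨i + l, l - 2 * i - 1, by omega, by omega⟩, i - l, -l - 2 * i - 1, by omega, by omega⟩

theorem psiNeg_mul_phiNeg_exponent_div_three (t m : ℤ) :
    ((2 * (m - t) ^ 2 + (m - t)).toNat + ((m + 2 * t + 1) ^ 2).toNat) / 3 =
      (2 * t ^ 2 + t).toNat + (m ^ 2 + m).toNat := by
  have := two_mul_sq_add_self_nonneg t
  have := sq_add_self_nonneg m
  have := two_mul_sq_add_self_nonneg (m - t)
  have := sq_nonneg (m + 2 * t + 1)
  grind

theorem negOnePow_sub_mul_negOnePow_add (t m : ℤ) :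
    (m - t).negOnePow * (m + 2 * t + 1).negOnePow = -t.negOnePow := by
  rw [← Int.negOnePow_add, ← Int.negOnePow_succ, Int.negOnePow_eq_iff]
  exact ⟨m, by ring⟩

/- A term `q ^ (2 y ^ 2 + y + j ^ 2)` lies in the residue class exactly when `j ≡ y + 1` or
`j ≡ -(y + 1)` modulo 3; each congruence alone contributes `-2 ψ(-q) ψ(q ^ 2)`, and both hold
together when `3 ∣ j` and `3 ∣ y + 1`. -/
theorem multisection_three_one_psiNeg_mul_phiNeg :
    multisection 3 1 (psiNeg * phiNeg) =
      expand 3 three_ne_zero (psiNeg * phiNeg) - 2 * (psiNeg * twoPsiSq) := by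
  let F (p : ℤ × ℤ) : ℤ⟦X⟧ := monomial (((2 * p.1 ^ 2 + p.1).toNat + (p.2 ^ 2).toNat) / 3)
    (p.1.negOnePow * p.2.negOnePow : ℤ)
  have hasSum_ψφ := hasSum_monomial_mul tendsto_psiNeg_exponent tendsto_phiNeg_exponent
    hasSum_psiNeg hasSum_phiNeg
  have hasSum_ψψ := (hasSum_monomial_mul tendsto_psiNeg_exponent tendsto_twoPsiSq_exponent
    hasSum_psiNeg hasSum_twoPsiSq).neg
  have plus : HasSum ((Set.range fun p : ℤ × ℤ ↦ (p.2 - p.1, p.2 + 2 * p.1 + 1)).indicator F)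
      (-(psiNeg * twoPsiSq)) := by
    rw [hasSum_indicator_range fun p p' h ↦ by grind]
    simpa only [F, Function.comp_def, psiNeg_mul_phiNeg_exponent_div_three, ← Units.val_mul,
      negOnePow_sub_mul_negOnePow_add, Units.val_neg, map_neg, mul_one] using hasSum_ψψ
  have minus : HasSum ((Set.range fun p : ℤ × ℤ ↦
      (p.2 - p.1, -(p.2 + 2 * p.1 + 1))).indicator F) (-(psiNeg * twoPsiSq)) := by
    rw [hasSum_indicator_range fun p p' h ↦ by grind]
    simpa only [F, Function.comp_def, neg_sq, Int.negOnePow_neg,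
      psiNeg_mul_phiNeg_exponent_div_three, ← Units.val_mul, negOnePow_sub_mul_negOnePow_add,
      Units.val_neg, map_neg, mul_one] using hasSum_ψψ
  have inter : HasSum ((Set.range fun p : ℤ × ℤ ↦ (-(3 * p.1 + 1), 3 * p.2)).indicator F)
      (-expand 3 three_ne_zero (psiNeg * phiNeg)) := by
    have exponent (a b : ℕ) : (9 * a + 1 + 9 * b) / 3 = 3 * (a + b) := by omega
    rw [hasSum_indicator_range fun p p' h ↦ by grind]
    simpa only [F, Function.comp_def, toNat_sq_three_mul, exponent, negOnePow_three_mul,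
      toNat_two_mul_sq_add_self_neg_three_mul_add_one, negOnePow_neg_three_mul_add_one,
      Units.val_neg, neg_mul, map_neg] using (hasSum_expand three_ne_zero hasSum_ψφ).neg
  have union := hasSum_multisection (m := 3) (r := 1) (by norm_num) hasSum_ψφ
  rw [setOf_psiNeg_mul_phiNeg_exponent_emod_three] at union
  rw [← range_inter_range_eq_range_mul_three] at inter
  have h := union.add inter
  rw [← Pi.add_def, Set.indicator_union_add_inter] at h
  linear_combination h.unique (plus.add minus)

end ThetaIdentities

section ModThree

theorem multisection_three_one_mul_sq {R : Type*} [CommRing R] {f g : R⟦X⟧}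
    (hf : multisection 3 2 f = 0) (hg : multisection 3 2 g = 0) :
    multisection 3 1 (f * g ^ 2) =
      2 * multisection 3 0 g * multisection 3 1 (f * g) -
        multisection 3 1 f * multisection 3 0 g ^ 2 := by
  have one_section {f : R⟦X⟧} (hf : multisection 3 2 f = 0) (h : R⟦X⟧) : multisection 3 1 (f * h) =
      multisection 3 0 f * multisection 3 1 h + multisection 3 1 f * multisection 3 0 h := by
    simp [multisection_mul, sum_range_succ, hf]
  have zero_section : multisection 3 0 (g * g) = multisection 3 0 g * multisection 3 0 g := by
    simp [multisection_mul, sum_range_succ, hg]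
  rw [sq, one_section hf, one_section hf, one_section hg, zero_section]
  ring

theorem expand_eq_pow_zmod (p : ℕ) [Fact p.Prime] (f : (ZMod p)⟦X⟧) :
    expand p (NeZero.ne p) f = f ^ p := by
  have h := MvPowerSeries.map_frobenius_expand p (NeZero.ne p) (f := f) (R := ZMod p)
  rw [ZMod.frobenius_zmod, MvPowerSeries.map_id] at h
  exact h

theorem constantCoeff_phiNeg : constantCoeff phiNeg = 1 := by
  have h := (WithPiTopology.hasSum_iff_hasSum_coeff ℤ).mp hasSum_phiNeg 0
  rw [coeff_zero_eq_constantCoeff_apply] at h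
  refine h.unique ?_
  convert hasSum_single (0 : ℤ) fun j hj ↦ ?_ using 1
  · simp
  · have := pow_pos (abs_pos.mpr hj) 2
    rw [sq_abs] at this
    exact (coeff_monomial ..).trans (if_neg (by omega))

theorem multisection_three_one_psiNeg_mul_phiNeg_sq :
    multisection 3 1 (psiNeg * phiNeg ^ 2) =
      3 * (expand 3 three_ne_zero phiNeg ^ 2 * expand 3 three_ne_zero psiNeg) -
        4 * (expand 3 three_ne_zero phiNeg * psiNeg * twoPsiSq) := by
  rw [multisection_three_one_mul_sq multisection_three_two_psiNeg multisection_three_two_phiNeg,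
    multisection_three_zero_phiNeg, multisection_three_one_psiNeg,
    multisection_three_one_psiNeg_mul_phiNeg, map_mul]
  ring

theorem map_multisection_three_one_regularSeries_four :
    PowerSeries.map (Int.castRingHom (ZMod 3)) (multisection 3 1 (regularSeries 4)) =
      PowerSeries.map (Int.castRingHom (ZMod 3)) (phiNeg * expand 3 three_ne_zero psiNeg) := by
  set c := PowerSeries.map (Int.castRingHom (ZMod 3))
  have phi_ne_zero : c phiNeg ≠ 0 := fun h ↦ by
    simpa [c, constantCoeff_phiNeg] using congrArg (coeff 0) h
  have three_eq_zero : (3 : (ZMod 3)⟦X⟧) = 0 := by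
    rw [← map_ofNat (C (R := ZMod 3)) 3, show (OfNat.ofNat 3 : ZMod 3) = 0 from rfl, map_zero]
  have expand_c (f : ℤ⟦X⟧) : c (expand 3 three_ne_zero f) = c f ^ 3 := by
    rw [map_expand, expand_eq_pow_zmod]
  have theta := congrArg c phiNeg_mul_twoPsiSq
  have sect := congrArg c multisection_three_one_psiNeg_mul_phiNeg_sq
  have sect_mul : c (multisection 3 1 (regularSeries 4)) * c phiNeg =
      c (multisection 3 1 (psiNeg * phiNeg ^ 2)) := by
    rw [map_multisection, ← multisection_mul_expand (by norm_num), map_multisection,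
      expand_eq_pow_zmod, ← regularSeries_four_mul_phiNeg]
    simp only [map_mul, map_pow, c]
    ring_nf
  refine mul_right_cancel₀ phi_ne_zero ?_
  rw [sect_mul]
  simp only [map_mul, map_sub, map_pow, map_ofNat, expand_c] at theta sect ⊢
  rw [sect]
  linear_combination (-4 * c phiNeg ^ 2 * c psiNeg) * theta +
    (c phiNeg ^ 6 * c psiNeg ^ 3 - 3 * c phiNeg ^ 2 * c psiNeg ^ 3) * three_eq_zero

theorem coeff_phiNeg_mul_expand_psiNeg {k : ℕ} (hk : ∀ j w : ℤ, 8 * j ^ 2 + 3 * w ^ 2 ≠ 8 * k + 3) :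
    coeff k (phiNeg * expand 3 three_ne_zero psiNeg) = 0 := by
  have h := hasSum_monomial_mul tendsto_phiNeg_exponent
    (tendsto_psiNeg_exponent.const_mul_atTop' three_pos) hasSum_phiNeg
    (hasSum_expand three_ne_zero hasSum_psiNeg)
  refine ((WithPiTopology.hasSum_iff_hasSum_coeff ℤ).mp h k).unique ?_
  convert hasSum_zero with p
  refine (coeff_monomial ..).trans (if_neg fun hp ↦ hk p.1 (4 * p.2 + 1) ?_)
  have := sq_nonneg p.1
  have := two_mul_sq_add_self_nonneg p.2
  grind

theorem three_dvd_Tcount {k : ℕ} (hk : ∀ j w : ℤ, 8 * j ^ 2 + 3 * w ^ 2 ≠ 8 * k + 3) :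
    3 ∣ Tcount 4 3 (3 * (3 * k + 1)) := by
  have h : ((Tcount 4 3 (3 * (3 * k + 1)) : ℤ) : ZMod 3) = 0 := by
    rw [Tcount_eq_coeff_regularSeries_pow, ← eq_intCast (Int.castRingHom (ZMod 3)), ← coeff_map,
      map_pow, ← expand_eq_pow_zmod, coeff_expand_mul, ← coeff_multisection, ← map_multisection,
      map_multisection_three_one_regularSeries_four, coeff_map,
      coeff_phiNeg_mul_expand_psiNeg hk, map_zero]
  exact_mod_cast (ZMod.intCast_zmod_eq_zero_iff_dvd _ 3).mp h

end ModThree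

section Descent

theorem eight_mul_sq_add_three_mul_sq_ne (n α : ℕ) (j w : ℤ) :
    8 * j ^ 2 + 3 * w ^ 2 ≠ 9 ^ α * (24 * n + 19) := by
  have three_dvd {z : ℤ} (hz : z ^ 2 % 3 = 0) : 3 ∣ z :=
    Int.prime_three.dvd_of_dvd_pow (Int.dvd_of_emod_eq_zero hz)
  induction α generalizing j w with
  | zero =>
    have := sq_emod_three j
    grind
  | succ α ih =>
    intro h
    rw [pow_succ' (9 : ℤ), mul_assoc] at h
    obtain ⟨i, rfl⟩ : 3 ∣ j := three_dvd (by omega)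
    rw [mul_pow] at h
    obtain ⟨v, rfl⟩ : 3 ∣ w := three_dvd (by omega)
    exact ih i v (by linarith)

end Descent

theorem stmt10 (n α : ℕ) :
    3 ∣ Tcount 4 3 (3 ^ (2 * α + 3) * n + (19 * 3 ^ (2 * α + 2) - 3) / 8) := by
  obtain ⟨t, ht⟩ : ∃ t, 9 ^ α = 8 * t + 1 := by
    have : 9 ^ α % 8 = 1 := by simp [Nat.pow_mod]
    exact ⟨9 ^ α / 8, by omega⟩
  let k := t * (24 * n + 19) + 3 * n + 2
  have hk : 8 * k + 3 = 9 ^ α * (24 * n + 19) := by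
    rw [ht]
    ring
  have argument : 3 ^ (2 * α + 3) * n + (19 * 3 ^ (2 * α + 2) - 3) / 8 = 3 * (3 * k + 1) := by
    have : 3 ^ (2 * α) = 9 ^ α := by rw [pow_mul]; norm_num
    rw [pow_add, pow_add, this]
    grind
  rw [argument]
  refine three_dvd_Tcount fun j w ↦ ?_
  have := eight_mul_sq_add_three_mul_sq_ne n α j w
  zify at hk
  rwa [hk]
end

section
/- Let p be an odd prime and let s be an integer with 1 ≤ s ≤ 8p, s ≡ 1 (mod 8), and s a quadratic nonresidue modulo p. Then for all n ≥ 0, T_2(pn + (s−1)/8) ≡ 0 (mod 2). -/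
/-!
Write `f_m = ∏_{i ≥ 1} (1 - q ^ (m i))` and `ψ = ∑_{k ≥ 0} q ^ (k (k + 1) / 2)`. Modulo `2` we have
`f₂ = f₁ ^ 2`, so the generating function `f₂ / f₁` of the `2`-regular partitions is `f₁`, and
Gauss's identity `f₁ ψ = f₂ ^ 2` becomes `ψ = f₁ ^ 3`. Hence `T₂(N)` is odd exactly when `N` is
triangular, i.e. when `8 N + 1` is a square; for `N = m n + (s - 1) / 8` this square is `s` modulo
`m`. Gauss's identity is the limit of a finite identity of Shanks.
-/

open Filter Finset PowerSeries Topology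
open scoped PowerSeries.WithPiTopology

section Triangular

/-- The `k`-th triangular number `0 + 1 + ⋯ + k`. -/
def triangular (k : ℕ) : ℕ := k * (k + 1) / 2

theorem two_mul_triangular (k : ℕ) : 2 * triangular k = k * (k + 1) :=
  Nat.mul_div_cancel' (Nat.even_mul_succ_self k).two_dvd

theorem triangular_strictMono : StrictMono triangular := by
  refine strictMono_nat_of_lt_succ fun k ↦ ?_
  have := two_mul_triangular k
  have := two_mul_triangular (k + 1)
  nlinarith

theorem eight_mul_triangular_add_one (k : ℕ) :
    8 * triangular k + 1 = (2 * k + 1) * (2 * k + 1) := by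
  linear_combination 4 * two_mul_triangular k

theorem isSquare_eight_mul_add_one_iff {n : ℕ} :
    IsSquare (8 * n + 1) ↔ n ∈ Set.range triangular := by
  constructor
  · rintro ⟨r, hr⟩
    have r_odd : Odd r := by
      rw [← Nat.odd_mul.trans and_self_iff, ← hr]
      exact ⟨4 * n, by ring⟩
    obtain ⟨k, rfl⟩ := r_odd
    have := eight_mul_triangular_add_one k
    exact ⟨k, by omega⟩
  · rintro ⟨k, rfl⟩
    exact ⟨2 * k + 1, eight_mul_triangular_add_one k⟩

end Triangular

section Shanks

variable {R : Type*} [CommRing R] (q : R)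

/-- The finite product `(q; q²)_n` over odd exponents in Shanks's identity. -/
def oddProd (n : ℕ) : R := ∏ k ∈ range n, (1 - q ^ (2 * k + 1))

/-- The finite product `(q²; q²)_n / (q²; q²)_s` over even exponents in Shanks's identity,
written without division. -/
def evenProd (s n : ℕ) : R := ∏ k ∈ Ico s n, (1 - q ^ (2 * (k + 1)))

/-- The `s`-th summand on the right-hand side of Shanks's identity `oddProd_mul_sum_triangular`. -/
def shanksTerm (n s : ℕ) : R := evenProd q s n * oddProd q s * q ^ (s * (2 * n + 1))

theorem oddProd_succ (n : ℕ) : oddProd q (n + 1) = oddProd q n * (1 - q ^ (2 * n + 1)) :=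
  prod_range_succ _ n

theorem evenProd_succ_right {s n : ℕ} (h : s ≤ n) :
    evenProd q s (n + 1) = evenProd q s n * (1 - q ^ (2 * (n + 1))) :=
  prod_Ico_succ_top h _

theorem evenProd_eq_mul_succ_left {s n : ℕ} (h : s < n) :
    evenProd q s n = (1 - q ^ (2 * (s + 1))) * evenProd q (s + 1) n :=
  prod_eq_prod_Ico_succ_bot h _

theorem evenProd_self (n : ℕ) : evenProd q n n = 1 := by
  simp [evenProd]

theorem evenProd_zero_mul_oddProd (n : ℕ) :
    evenProd q 0 n * oddProd q n = ∏ i ∈ range (2 * n), (1 - q ^ (i + 1)) := by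
  induction n with
  | zero => simp [oddProd, evenProd]
  | succ n ih =>
    rw [evenProd_succ_right q n.zero_le, oddProd_succ, mul_add_one 2 n, prod_range_succ,
      prod_range_succ, ← ih]
    ring

theorem shanksTerm_succ_sub {n s : ℕ} (h : s < n) :
    shanksTerm q (n + 1) s - (1 - q ^ (2 * n + 1)) * shanksTerm q n s =
      (1 - q ^ (2 * (s + 1))) * shanksTerm q n (s + 1) - (1 - q ^ (2 * s)) * shanksTerm q n s := by
  simp only [shanksTerm]
  rw [evenProd_succ_right q h.le, evenProd_eq_mul_succ_left q h, oddProd_succ]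
  ring

theorem sum_shanksTerm_succ (n : ℕ) :
    ∑ s ∈ range (n + 1), shanksTerm q (n + 1) s =
      (1 - q ^ (2 * n + 1)) * ∑ s ∈ range n, shanksTerm q n s +
        oddProd q (n + 1) * (q ^ triangular (2 * n) + q ^ triangular (2 * n + 1)) := by
  have telescope : ∑ s ∈ range n, shanksTerm q (n + 1) s
      - (1 - q ^ (2 * n + 1)) * ∑ s ∈ range n, shanksTerm q n s =
      (1 - q ^ (2 * n)) * shanksTerm q n n := by
    rw [mul_sum, ← sum_sub_distrib,
      sum_congr rfl fun s hs ↦ shanksTerm_succ_sub q (mem_range.mp hs),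
      sum_range_sub fun s ↦ (1 - q ^ (2 * s)) * shanksTerm q n s]
    simp
  have even_index : triangular (2 * n) = n * (2 * n + 1) := by
    linarith [two_mul_triangular (2 * n)]
  have odd_index : triangular (2 * n + 1) = (n + 1) * (2 * n + 1) := by
    linarith [two_mul_triangular (2 * n + 1)]
  rw [sum_range_succ, sub_eq_iff_eq_add.mp telescope, even_index, odd_index]
  simp only [shanksTerm, evenProd_succ_right q le_rfl, evenProd_self, oddProd_succ]
  ring

theorem oddProd_mul_sum_triangular (n : ℕ) :
    oddProd q n * ∑ k ∈ range (2 * n), q ^ triangular k = ∑ s ∈ range n, shanksTerm q n s := by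
  induction n with
  | zero => simp
  | succ n ih =>
    rw [sum_shanksTerm_succ, ← ih, mul_add_one 2 n, sum_range_succ, sum_range_succ, oddProd_succ]
    ring

theorem pow_dvd_oddProd_mul_sum_triangular_sub {n : ℕ} (hn : n ≠ 0) :
    q ^ (2 * n + 1) ∣ oddProd q n * ∑ k ∈ range (2 * n), q ^ triangular k - evenProd q 0 n := by
  obtain ⟨n, rfl⟩ := Nat.exists_eq_add_one_of_ne_zero hn
  have first_term : shanksTerm q (n + 1) 0 = evenProd q 0 (n + 1) := by
    simp [shanksTerm, oddProd]
  rw [oddProd_mul_sum_triangular, sum_range_succ', first_term, add_sub_cancel_right]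
  exact dvd_sum fun s _ ↦
    dvd_mul_of_dvd_right (pow_dvd_pow q (Nat.le_mul_of_pos_left _ s.succ_pos)) _

end Shanks

section Definitions

variable (R : Type*) [CommSemiring R]

/-- Ramanujan's theta function `ψ = ∑_{k ≥ 0} X ^ (k (k + 1) / 2)`, given by its coefficients:
`n` is triangular if and only if `8 n + 1` is a square. -/
def ramanujanPsi : R⟦X⟧ := PowerSeries.mk fun n ↦ if IsSquare (8 * n + 1) then 1 else 0

/-- The generating function of the `ℓ`-regular partitions, i.e. those without parts divisible
by `ℓ`. -/
def regularGenFun (ℓ : ℕ) : R⟦X⟧ :=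
  PowerSeries.mk fun n ↦ (#(Nat.Partition.restricted n (¬ ℓ ∣ ·)) : R)

end Definitions

/-- Splits a `k`-tuple of `ℓ`-regular partitions of total size `n`, the objects counted by
`Tcount ℓ k n`, into the tuple of its sizes and a partition of each size. -/
noncomputable def regularTuplesEquiv (ℓ k n : ℕ) :
    {f : Fin k → Σ m : ℕ, Nat.Partition m //
      (∑ i, (f i).1) = n ∧ ∀ i, ∀ p ∈ (f i).2.parts, ¬ ℓ ∣ p} ≃
    Σ l : finsuppAntidiag (univ : Finset (Fin k)) n,
      ∀ i, Nat.Partition.restricted (l.1 i) (¬ ℓ ∣ ·) where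
  toFun f := ⟨⟨Finsupp.equivFunOnFinite.symm fun i ↦ (f.1 i).1, by simpa using f.2.1⟩,
    fun i ↦ ⟨(f.1 i).2, mem_filter.mpr ⟨mem_univ _, f.2.2 i⟩⟩⟩
  invFun g := ⟨fun i ↦ ⟨g.1.1 i, g.2 i⟩, (mem_finsuppAntidiag.mp g.1.2).1,
    fun i ↦ (mem_filter.mp (g.2 i).2).2⟩
  left_inv _ := rfl
  right_inv := by
    rintro ⟨⟨l, hl⟩, g⟩
    obtain ⟨l, rfl⟩ := Finsupp.equivFunOnFinite.symm.surjective l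
    rfl

theorem natCast_Tcount (R : Type*) [CommSemiring R] (ℓ k n : ℕ) :
    (Tcount ℓ k n : R) = coeff n (regularGenFun R ℓ ^ k) := by
  rw [← Fin.prod_const, coeff_prod, Tcount, Nat.card_congr (regularTuplesEquiv ℓ k n),
    Nat.card_eq_fintype_card, Fintype.card_sigma, Nat.cast_sum,
    ← sum_coe_sort (finsuppAntidiag univ n) fun l ↦ ∏ i, coeff (l i) (regularGenFun R ℓ)]
  refine Fintype.sum_congr _ _ fun l ↦ ?_
  simp [regularGenFun]

section Identities

variable (R : Type*) [CommRing R] [TopologicalSpace R]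

/-- Euler's function `f_m = ∏_{i ≥ 1} (1 - X ^ (m i))`. -/
noncomputable def eulerFunction (m : ℕ) : R⟦X⟧ := ∏' i, (1 - X ^ (m * (i + 1)))

variable {R} in
theorem tendsto_zero_of_eventually_X_pow_dvd {f : ℕ → R⟦X⟧} (h : ∀ᶠ n in atTop, X ^ n ∣ f n) :
    Tendsto f atTop (𝓝 0) := by
  rw [WithPiTopology.tendsto_iff_coeff_tendsto]
  intro d
  apply tendsto_nhds_of_eventually_eq
  filter_upwards [h, eventually_gt_atTop d] with n hn hd
  rw [X_pow_dvd_iff.mp hn d hd, map_zero]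

theorem hasSum_ramanujanPsi : HasSum (fun k ↦ X ^ triangular k) (ramanujanPsi R) := by
  have coeff_triangular (k : ℕ) : coeff (triangular k) (ramanujanPsi R) = 1 := by
    simp [ramanujanPsi, isSquare_eight_mul_add_one_iff]
  have h := (ramanujanPsi R).hasSum_of_monomials_self
  rw [← triangular_strictMono.injective.hasSum_iff] at h
  · simpa [Function.comp_def, coeff_triangular, X_pow_eq] using h
  · intro n hn
    simp [ramanujanPsi, isSquare_eight_mul_add_one_iff.not.mpr hn]

theorem multipliable_one_sub_X_pow_mul {m : ℕ} (hm : m ≠ 0) :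
    Multipliable fun i ↦ (1 : R⟦X⟧) - X ^ (m * (i + 1)) := by
  nontriviality R
  simp_rw [sub_eq_add_neg]
  apply WithPiTopology.multipliable_one_add_of_tendsto_order_atTop_nhds_top
  refine ENat.tendsto_nhds_top_iff_natCast_lt.mpr fun n ↦ eventually_atTop.mpr ⟨n, fun i hi ↦ ?_⟩
  rw [order_neg, order_X_pow, Nat.cast_lt]
  exact (Nat.lt_succ_of_le hi).trans_le (Nat.le_mul_of_pos_left _ (Nat.pos_of_ne_zero hm))

variable [T2Space R]

theorem eulerFunction_ne_zero [Nontrivial R] {m : ℕ} (hm : m ≠ 0) : eulerFunction R m ≠ 0 := by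
  have constantCoeff_eq : constantCoeff (eulerFunction R m) = 1 := by
    rw [eulerFunction, (multipliable_one_sub_X_pow_mul R hm).map_tprod _
      (WithPiTopology.continuous_constantCoeff R)]
    simp [hm]
  exact ne_zero_of_map (f := constantCoeff) (constantCoeff_eq ▸ one_ne_zero)

variable [IsTopologicalRing R]

theorem eulerFunction_one_mul_ramanujanPsi :
    eulerFunction R 1 * ramanujanPsi R = eulerFunction R 2 ^ 2 := by
  have two_mul_atTop : Tendsto (2 * · : ℕ → ℕ) atTop atTop := tendsto_id.const_mul_atTop' two_pos
  have lim_f₁ : Tendsto (fun n ↦ ∏ i ∈ range (2 * n), (1 - X ^ (i + 1) : R⟦X⟧)) atTop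
      (𝓝 (eulerFunction R 1)) := by
    have h := (multipliable_one_sub_X_pow_mul R one_ne_zero).hasProd.tendsto_prod_nat
    simpa only [eulerFunction, one_mul, Function.comp_def] using h.comp two_mul_atTop
  have lim_ψ : Tendsto (fun n ↦ ∑ k ∈ range (2 * n), (X : R⟦X⟧) ^ triangular k) atTop
      (𝓝 (ramanujanPsi R)) :=
    (hasSum_ramanujanPsi R).tendsto_sum_nat.comp two_mul_atTop
  have lim_f₂ : Tendsto (fun n ↦ evenProd (X : R⟦X⟧) 0 n) atTop (𝓝 (eulerFunction R 2)) := by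
    have h := (multipliable_one_sub_X_pow_mul R two_ne_zero).hasProd.tendsto_prod_nat
    simpa only [evenProd, eulerFunction, range_eq_Ico] using h
  have lim_error : Tendsto (fun n ↦ oddProd X n * ∑ k ∈ range (2 * n), X ^ triangular k
      - evenProd (X : R⟦X⟧) 0 n) atTop (𝓝 0) := by
    apply tendsto_zero_of_eventually_X_pow_dvd
    filter_upwards [eventually_ne_atTop 0] with n hn
    exact (pow_dvd_pow X (by omega)).trans (pow_dvd_oddProd_mul_sum_triangular_sub X hn)
  have lim_right := lim_f₂.mul (lim_error.add lim_f₂)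
  rw [zero_add, ← sq] at lim_right
  refine tendsto_nhds_unique (lim_f₁.mul lim_ψ) (lim_right.congr fun n ↦ ?_)
  rw [← evenProd_zero_mul_oddProd]
  ring

theorem eulerFunction_pow_char (p : ℕ) [Fact p.Prime] [CharP R p] {m : ℕ} (hm : m ≠ 0) :
    eulerFunction R m ^ p = eulerFunction R (m * p) := by
  have : CharP R⟦X⟧ p := charP_of_injective_algebraMap (C_injective (R := R)) p
  rw [eulerFunction, ← (multipliable_one_sub_X_pow_mul R hm).tprod_pow, eulerFunction]
  refine tprod_congr fun i ↦ ?_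
  rw [sub_pow_char, one_pow, ← pow_mul, mul_right_comm]

theorem regularGenFun_mul_eulerFunction_one [NoZeroDivisors R] {ℓ : ℕ} (hℓ : ℓ ≠ 0) :
    regularGenFun R ℓ * eulerFunction R 1 = eulerFunction R ℓ := by
  have ℓ_pos := Nat.pos_of_ne_zero hℓ
  rw [regularGenFun,
    Nat.Partition.powerSeriesMk_card_restricted_eq_powerSeriesMk_card_countRestricted R ℓ_pos,
    Nat.Partition.powerSeriesMk_card_countRestricted_eq_tprod R ℓ_pos, eulerFunction,
    ← (Nat.Partition.multipliable_powerSeriesMk_card_countRestricted R ℓ).tprod_mul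
      (multipliable_one_sub_X_pow_mul R one_ne_zero), eulerFunction]
  refine tprod_congr fun i ↦ ?_
  simp_rw [one_mul, pow_mul, geom_sum_mul_neg, ← pow_mul, mul_comm]

end Identities

theorem regularGenFun_two_pow_three (R : Type*) [CommRing R] [NoZeroDivisors R] [CharP R 2] :
    regularGenFun R 2 ^ 3 = ramanujanPsi R := by
  let : TopologicalSpace R := ⊥
  have : DiscreteTopology R := ⟨rfl⟩
  have : Nontrivial R := CharP.nontrivial_of_char_ne_one (R := R) (v := 2) (by norm_num)
  have f₁_ne_zero := eulerFunction_ne_zero R one_ne_zero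
  have f₂_eq : eulerFunction R 1 ^ 2 = eulerFunction R 2 := eulerFunction_pow_char R 2 one_ne_zero
  have regularGenFun_eq : regularGenFun R 2 = eulerFunction R 1 := by
    apply mul_right_cancel₀ f₁_ne_zero
    rw [regularGenFun_mul_eulerFunction_one R two_ne_zero, ← f₂_eq, sq]
  apply mul_left_cancel₀ f₁_ne_zero
  rw [eulerFunction_one_mul_ramanujanPsi, regularGenFun_eq, ← f₂_eq]
  ring

theorem odd_Tcount_two_three_iff {n : ℕ} : Odd (Tcount 2 3 n) ↔ IsSquare (8 * n + 1) := by
  rw [← ZMod.natCast_eq_one_iff_odd, natCast_Tcount, regularGenFun_two_pow_three, ramanujanPsi,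
    coeff_mk]
  simp

theorem stmt15_general (m s : ℕ) (hs : s ≡ 1 [MOD 8]) (hnsq : ¬ IsSquare (s : ZMod m)) (n : ℕ) :
    2 ∣ Tcount 2 3 (m * n + (s - 1) / 8) := by
  rw [← even_iff_two_dvd, ← Nat.not_odd_iff_even, odd_Tcount_two_three_iff]
  contrapose! hnsq
  have square_eq : 8 * (m * n + (s - 1) / 8) + 1 = s + m * (8 * n) := by
    have : s % 8 = 1 := hs
    have : m * (8 * n) = 8 * (m * n) := by ring
    omega
  rw [square_eq] at hnsq
  simpa using hnsq.map (Nat.castRingHom (ZMod m))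

theorem stmt15 (p : ℕ) (hp : p.Prime) (hodd : Odd p) (s : ℕ)
    (hs1 : 1 ≤ s) (hs2 : s ≤ 8 * p) (hs8 : s ≡ 1 [MOD 8])
    (hqnr : ¬ IsSquare ((s : ZMod p))) (n : ℕ) :
    2 ∣ Tcount 2 3 (p * n + (s - 1) / 8) :=
  stmt15_general p s hs8 hqnr n
end
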